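/- Let n ≥ 1 and m ≥ 2, let H be a compact metrizable space with n+1 distinct points v_1, …, v_{n+1}, and set H^× = H \ {v_1, …, v_{n+1}}. Let (X_1,d_1,a_1), …, (X_{n+1},d_{n+1},a_{n+1}) be pointed proper CAT(0) metric spaces with d_pGH((X_i,d_i,a_i),(X_j,d_j,a_j)) > 0 for all distinct i, j. Then there exists a continuous map F : H × {1,…,m} → 𝒫𝒵 (where {1,…,m} carries the discrete topology) such that (1) F(v_i, j) = (X_i,d_i,a_i) for all i ∈ {1,…,n+1} and j ∈ {1,…,m}, and (2) F is injective on H^× × {1,…,m}. -/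

import Mathlib

/-- A metric space is *geodesic* if any two points `x, y` are joined by a
geodesic, i.e. a map `γ : [0,1] → X` with `γ 0 = x`, `γ 1 = y` and
`dist (γ s) (γ t) = |s - t| * dist x y`. -/
def IsGeodesicSpace (X : Type*) [MetricSpace X] : Prop :=
  ∀ x y : X, ∃ γ : ℝ → X, γ 0 = x ∧ γ 1 = y ∧
    ∀ s ∈ Set.Icc (0 : ℝ) 1, ∀ t ∈ Set.Icc (0 : ℝ) 1,
      dist (γ s) (γ t) = |s - t| * dist x y

/-- A metric space is *CAT(0)* if it is geodesic and every geodesic triangle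
satisfies the Euclidean comparison inequality; equivalently (the formulation
used here), the comparison (CN) inequality holds along every geodesic. -/
def IsCAT0Space (X : Type*) [MetricSpace X] : Prop :=
  IsGeodesicSpace X ∧
  ∀ x y z : X, ∀ γ : ℝ → X, γ 0 = x → γ 1 = y →
    (∀ s ∈ Set.Icc (0 : ℝ) 1, ∀ t ∈ Set.Icc (0 : ℝ) 1,
      dist (γ s) (γ t) = |s - t| * dist x y) →
    ∀ t ∈ Set.Icc (0 : ℝ) 1,
      dist z (γ t) ^ 2 ≤
        (1 - t) * dist z x ^ 2 + t * dist z y ^ 2 - t * (1 - t) * dist x y ^ 2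

/-- `IsAdmissiblePair a b t h` says that `h` is a `(t; a, b)`-admissible metric
on the disjoint union `X ⊕ Y`: it is a metric restricting to the given
distances on `X²` and `Y²`, with `h(a,b) < t`, and the closed ball of radius
`t⁻¹` around `a` (resp. `b`) is contained in the open `t`-neighbourhood of `Y`
(resp. `X`). -/
def IsAdmissiblePair {X Y : Type*} [MetricSpace X] [MetricSpace Y]
    (a : X) (b : Y) (t : ℝ) (h : X ⊕ Y → X ⊕ Y → ℝ) : Prop :=
  (∀ p q, h p q = 0 ↔ p = q) ∧
  (∀ p q, h p q = h q p) ∧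
  (∀ p q r, h p r ≤ h p q + h q r) ∧
  (∀ x y : X, h (Sum.inl x) (Sum.inl y) = dist x y) ∧
  (∀ x y : Y, h (Sum.inr x) (Sum.inr y) = dist x y) ∧
  h (Sum.inl a) (Sum.inr b) < t ∧
  (∀ p, h (Sum.inl a) p ≤ t⁻¹ → ∃ y : Y, h p (Sum.inr y) < t) ∧
  (∀ p, h (Sum.inr b) p ≤ t⁻¹ → ∃ x : X, h p (Sum.inl x) < t)

/-- The pointed Gromov–Hausdorff distance
`d_pGH = min { d'_pGH, 1/2 }`, where `d'_pGH` is the infimum of all `t > 0`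
for which a `(t; a, b)`-admissible metric on `X ⊕ Y` exists.  (Taking `sInf`
of the set together with `1/2` implements the truncation at `1/2`.) -/
noncomputable def pghDistOf (X Y : Type*) [MetricSpace X] [MetricSpace Y]
    (a : X) (b : Y) : ℝ :=
  sInf (insert (1 / 2 : ℝ)
    {t : ℝ | 0 < t ∧ ∃ h : X ⊕ Y → X ⊕ Y → ℝ, IsAdmissiblePair a b t h})

/-- A pointed proper metric space: a (proper) metric space together with a
base point. -/
structure PointedProperMetricSpace : Type 1 where
  carrier : Type
  [met : MetricSpace carrier]
  [prop : ProperSpace carrier]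
  pt : carrier

attribute [instance] PointedProperMetricSpace.met PointedProperMetricSpace.prop

/-- The pointed Gromov–Hausdorff distance between pointed proper metric
spaces. -/
noncomputable def pghDist (p q : PointedProperMetricSpace) : ℝ :=
  pghDistOf p.carrier q.carrier p.pt q.pt

/-- The topology induced by the pointed Gromov–Hausdorff distance (generated
by its open balls). -/
instance : TopologicalSpace PointedProperMetricSpace :=
  TopologicalSpace.generateFrom
    {s | ∃ (p : PointedProperMetricSpace) (ε : ℝ), 0 < ε ∧
      s = {q | pghDist p q < ε}}

/-- Two pointed metric spaces are identified in `𝒫ℳ` when there is a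
base-point-preserving isometric bijection between them. -/
instance pointedIsometrySetoid : Setoid PointedProperMetricSpace where
  r p q := ∃ e : p.carrier ≃ᵢ q.carrier, e p.pt = q.pt
  iseqv := by
    refine ⟨fun p => ⟨IsometryEquiv.refl _, rfl⟩, ?_, ?_⟩
    · rintro p q ⟨e, he⟩
      exact ⟨e.symm, by rw [← he, IsometryEquiv.symm_apply_apply]⟩
    · rintro p q r ⟨e, he⟩ ⟨f, hf⟩
      exact ⟨e.trans f, by rw [IsometryEquiv.trans_apply, he, hf]⟩

/-- `𝒫ℳ`: the space of pointed isometry classes of pointed proper metric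
spaces, with the (quotient of the) pointed Gromov–Hausdorff topology. -/
def PGHSpace : Type 1 := Quotient pointedIsometrySetoid

instance : TopologicalSpace PGHSpace :=
  instTopologicalSpaceQuotient

/-- The pointed isometry class of a pointed proper metric space. -/
def PGHSpace.mk (X : Type) [MetricSpace X] [ProperSpace X] (a : X) : PGHSpace :=
  Quotient.mk pointedIsometrySetoid ⟨X, a⟩

/-- `𝒫𝒵`: the subset of `𝒫ℳ` consisting of pointed proper CAT(0)
spaces. -/
def PGHCat0 : Set PGHSpace :=
  {x | IsCAT0Space (Quotient.out (α := PointedProperMetricSpace) x).carrier}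

/-!
Glue all the given spaces at their base points, together with countably many planar sectors. To a
point `z` corresponds the part of this wedge which is kept after cutting the `i`-th branch at
distance `r z i` from the base point. It is again CAT(0), being a wedge of balls in CAT(0) spaces,
and if the radii of all but finitely many branches are uniformly small, it depends continuously on
the radii. At the prescribed points one of the given spaces has radius `∞` and all other branches
have radius `0`, so that only this space remains. Elsewhere the radii of the sectors determine `z`,
and it suffices to recover them from the pointed isometry class.

To this end, choose sectors of different angles. Near a point of a sector, other than the apex, the
longest chords of the spheres about the base point are `c` times as long as the radius, where `c`
depends only on the angle. A proper space is separable, so only countably many values `c` occur in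
this way in the given spaces, and the angles can be chosen to avoid them. The points with the ratio
`c` of a given sector are then exactly the points of that sector other than the apex, and their
distances from the base point show its radius.
-/

section CNPoint

variable {X : Type*} [MetricSpace X] {x y p w w' : X} {s t τ : ℝ}

/-- `w` satisfies the Bruhat–Tits (CN) inequality with respect to the pair `x, y` and the ratio
`t : 1 - t`. For `t ∈ [0, 1]` this forces `w` to lie at distance `t * dist x y` from `x` on a
geodesic from `x` to `y`, so that a space is CAT(0) as soon as it has all such points. -/
def IsCNPoint (t : ℝ) (x y w : X) : Prop :=
  ∀ z, dist z w ^ 2 ≤ (1 - t) * dist z x ^ 2 + t * dist z y ^ 2 - t * (1 - t) * dist x y ^ 2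

namespace IsCNPoint

theorem symm (h : IsCNPoint t x y w) : IsCNPoint (1 - t) y x w := fun z => by
  rw [dist_comm y x]
  linarith [h z]

theorem dist_left_le (h : IsCNPoint t x y w) (ht : 0 ≤ t) : dist x w ≤ t * dist x y := by
  have hx := h x
  rw [dist_self] at hx
  exact abs_le_of_sq_le_sq' (by linarith) (by positivity) |>.2

theorem dist_left (h : IsCNPoint t x y w) (ht : t ∈ Set.Icc (0 : ℝ) 1) :
    dist x w = t * dist x y := by
  have hright := h.symm.dist_left_le (sub_nonneg.2 ht.2)
  rw [dist_comm y x] at hright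
  linarith [h.dist_left_le ht.1, dist_triangle_right x y w]

theorem dist_right (h : IsCNPoint t x y w) (ht : t ∈ Set.Icc (0 : ℝ) 1) :
    dist y w = (1 - t) * dist x y := by
  rw [h.symm.dist_left (Set.Icc.mem_iff_one_sub_mem.1 ht), dist_comm y x]

theorem dist_eq (h : IsCNPoint s x y w) (h' : IsCNPoint t x y w')
    (hs : s ∈ Set.Icc (0 : ℝ) 1) (ht : t ∈ Set.Icc (0 : ℝ) 1) :
    dist w w' = |s - t| * dist x y := by
  apply le_antisymm
  · have hw := h' w
    rw [dist_comm w x, dist_comm w y, h.dist_left hs, h.dist_right hs] at hw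
    refine abs_le_of_sq_le_sq' ?_ (by positivity) |>.2
    rw [mul_pow, sq_abs]
    linarith
  · have := abs_dist_sub_le w w' x
    rwa [dist_comm w, dist_comm w', h.dist_left hs, h'.dist_left ht, ← sub_mul, abs_mul,
      abs_of_nonneg (dist_nonneg (x := x))] at this

theorem eq_of_dist_eq (h : IsCNPoint t x y w) (hx : dist x w' = t * dist x y)
    (hy : dist y w' = (1 - t) * dist x y) : w' = w := by
  have hw := h w'
  rw [dist_comm w' x, dist_comm w' y, hx, hy] at hw
  exact dist_eq_zero.1 (pow_eq_zero_iff two_ne_zero |>.1 (le_antisymm (by linarith) (sq_nonneg _)))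

theorem dist_le (h : IsCNPoint t x y w) (ht : t ∈ Set.Icc (0 : ℝ) 1) (z : X) :
    dist z w ≤ (1 - t) * dist z x + t * dist z y := by
  have ht' : 0 ≤ 1 - t := sub_nonneg.2 ht.2
  have hdiff : (dist x z - dist y z) ^ 2 ≤ dist x y ^ 2 :=
    sq_le_sq' (abs_le.1 (abs_dist_sub_le x y z)).1 (abs_le.1 (abs_dist_sub_le x y z)).2
  rw [dist_comm x z, dist_comm y z] at hdiff
  refine abs_le_of_sq_le_sq' ?_ (add_nonneg (by positivity) (mul_nonneg ht.1 dist_nonneg)) |>.2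
  linarith [h z, mul_le_mul_of_nonneg_left hdiff (mul_nonneg ht.1 ht')]

theorem trans (hp : IsCNPoint τ x y p) (hτ : τ ∈ Set.Icc (0 : ℝ) 1) (hs : 0 ≤ s)
    (hw : IsCNPoint s x p w) : IsCNPoint (s * τ) x y w := fun z => by
  have hwz := hw z
  rw [hp.dist_left hτ] at hwz
  linarith [mul_le_mul_of_nonneg_left (hp z) hs]

theorem of_dist_eq_add (hτ : τ ∈ Set.Icc (0 : ℝ) 1) (hx : dist x p = τ * dist x y)
    (hy : dist y p = (1 - τ) * dist x y)
    (h : ∀ z, dist z y = dist z p + dist y p ∨ dist z x = dist z p + dist x p) :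
    IsCNPoint τ x y p := fun z => by
  rcases h z with hz | hz
  · have hzx : (dist z p - dist x p) ^ 2 ≤ dist z x ^ 2 :=
      sq_le_sq.2 ((abs_dist_sub_le z x p).trans (le_abs_self _))
    rw [hx] at hzx
    rw [hz, hy]
    linarith [mul_le_mul_of_nonneg_left hzx (sub_nonneg.2 hτ.2)]
  · have hzy : (dist z p - dist y p) ^ 2 ≤ dist z y ^ 2 :=
      sq_le_sq.2 ((abs_dist_sub_le z y p).trans (le_abs_self _))
    rw [hy] at hzy
    rw [hz, hx]
    linarith [mul_le_mul_of_nonneg_left hzy hτ.1]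

theorem exists_of_le (hp : IsCNPoint τ x y p) (hτ : τ ∈ Set.Icc (0 : ℝ) 1) (ht : 0 ≤ t)
    (htτ : t ≤ τ) (h : ∀ s ∈ Set.Icc (0 : ℝ) 1, ∃ w, IsCNPoint s x p w) :
    ∃ w, IsCNPoint t x y w := by
  have hs : t / τ ∈ Set.Icc (0 : ℝ) 1 := ⟨div_nonneg ht hτ.1, div_le_one_of_le₀ htτ hτ.1⟩
  obtain ⟨w, hw⟩ := h _ hs
  have htw := hp.trans hτ hs.1 hw
  rw [div_mul_cancel_of_imp fun h0 => le_antisymm (htτ.trans_eq h0) ht] at htw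
  exact ⟨w, htw⟩

theorem exists_of_exists (hp : IsCNPoint τ x y p) (hτ : τ ∈ Set.Icc (0 : ℝ) 1)
    (hx : ∀ s ∈ Set.Icc (0 : ℝ) 1, ∃ w, IsCNPoint s x p w)
    (hy : ∀ s ∈ Set.Icc (0 : ℝ) 1, ∃ w, IsCNPoint s y p w) (ht : t ∈ Set.Icc (0 : ℝ) 1) :
    ∃ w, IsCNPoint t x y w := by
  rcases le_total t τ with htτ | htτ
  · exact hp.exists_of_le hτ ht.1 htτ hx
  · obtain ⟨w, hw⟩ := hp.symm.exists_of_le (Set.Icc.mem_iff_one_sub_mem.1 hτ)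
      (sub_nonneg.2 ht.2) (sub_le_sub_left htτ 1) hy
    exact ⟨w, sub_sub_cancel 1 t ▸ hw.symm⟩

end IsCNPoint

theorem isCAT0Space_iff_exists_isCNPoint :
    IsCAT0Space X ↔ ∀ x y : X, ∀ t ∈ Set.Icc (0 : ℝ) 1, ∃ w, IsCNPoint t x y w := by
  constructor
  · rintro ⟨hgeo, hcn⟩ x y t ht
    obtain ⟨γ, h0, h1, hγ⟩ := hgeo x y
    exact ⟨γ t, fun z => hcn x y z γ h0 h1 hγ t ht⟩
  · intro h
    refine ⟨fun x y => ?_, fun x y z γ h0 h1 hγ t ht => ?_⟩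
    · have : Nonempty X := ⟨x⟩
      choose! γ hγ using h x y
      have h01 : (0 : ℝ) ∈ Set.Icc (0 : ℝ) 1 := ⟨le_rfl, zero_le_one⟩
      have h11 : (1 : ℝ) ∈ Set.Icc (0 : ℝ) 1 := ⟨zero_le_one, le_rfl⟩
      refine ⟨γ, ?_, ?_, fun s hs t ht => (hγ s hs).dist_eq (hγ t ht) hs ht⟩
      · exact (dist_eq_zero.1 (((hγ 0 h01).dist_left h01).trans (zero_mul _))).symm
      · exact (dist_eq_zero.1 (((hγ 1 h11).dist_right h11).trans (by ring))).symm
    · obtain ⟨w, hw⟩ := h x y t ht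
      have hx := hγ 0 ⟨le_rfl, zero_le_one⟩ t ht
      have hy := hγ 1 ⟨zero_le_one, le_rfl⟩ t ht
      rw [h0, zero_sub, abs_neg, abs_of_nonneg ht.1] at hx
      rw [h1, abs_of_nonneg (sub_nonneg.2 ht.2)] at hy
      rw [hw.eq_of_dist_eq hx hy]
      exact hw z

end CNPoint

section CAT0

variable {X Y : Type*} [MetricSpace X] [MetricSpace Y]

theorem IsGeodesicSpace.exists_dist_eq (hX : IsGeodesicSpace X) (a x : X) {s : ℝ} (hs : 0 ≤ s)
    (hsx : s ≤ dist a x) : ∃ y, dist a y = s ∧ dist y x = dist a x - s := by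
  rcases hs.eq_or_lt with rfl | hs
  · exact ⟨a, dist_self a, (sub_zero _).symm⟩
  have hax : 0 < dist a x := hs.trans_le hsx
  obtain ⟨γ, h0, h1, hγ⟩ := hX a x
  have ht : s / dist a x ∈ Set.Icc (0 : ℝ) 1 := ⟨by positivity, (div_le_one hax).2 hsx⟩
  refine ⟨γ (s / dist a x), ?_, ?_⟩
  · have := hγ 0 ⟨le_rfl, zero_le_one⟩ _ ht
    rwa [h0, zero_sub, abs_neg, abs_of_nonneg ht.1, div_mul_cancel₀ _ hax.ne'] at this
  · have := hγ _ ht 1 ⟨zero_le_one, le_rfl⟩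
    rwa [h1, abs_sub_comm, abs_of_nonneg (sub_nonneg.2 ht.2), sub_mul, one_mul,
      div_mul_cancel₀ _ hax.ne'] at this

theorem IsCAT0Space.subtype (hX : IsCAT0Space X) {S : Set X}
    (hS : ∀ x ∈ S, ∀ y ∈ S, ∀ t ∈ Set.Icc (0 : ℝ) 1, ∀ w, IsCNPoint t x y w → w ∈ S) :
    IsCAT0Space S := by
  rw [isCAT0Space_iff_exists_isCNPoint] at hX ⊢
  rintro ⟨x, hx⟩ ⟨y, hy⟩ t ht
  obtain ⟨w, hw⟩ := hX x y t ht
  exact ⟨⟨w, hS x hx y hy t ht w hw⟩, fun z => hw z⟩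

theorem IsCAT0Space.of_isometryEquiv (e : X ≃ᵢ Y) (hX : IsCAT0Space X) : IsCAT0Space Y := by
  rw [isCAT0Space_iff_exists_isCNPoint] at hX ⊢
  intro x y t ht
  obtain ⟨w, hw⟩ := hX (e.symm x) (e.symm y) t ht
  refine ⟨e w, fun z => ?_⟩
  simpa only [← e.symm.dist_eq, e.symm_apply_apply] using hw (e.symm z)

theorem IsCAT0Space.closedEBall (hX : IsCAT0Space X) (a : X) (r : ENNReal) :
    IsCAT0Space (Metric.closedEBall a r) := by
  refine hX.subtype fun x hx y hy t ht w hw => ?_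
  have hconv : dist a w ≤ max (dist a x) (dist a y) := by
    have hx' := mul_le_mul_of_nonneg_left (le_max_left (dist a x) (dist a y)) (sub_nonneg.2 ht.2)
    have hy' := mul_le_mul_of_nonneg_left (le_max_right (dist a x) (dist a y)) ht.1
    linarith [hw.dist_le ht a]
  rw [Metric.mem_closedEBall'] at hx hy ⊢
  rw [edist_dist] at hx hy ⊢
  refine (ENNReal.ofReal_le_ofReal hconv).trans ?_
  rw [ENNReal.ofReal_max]
  exact max_le hx hy

theorem isCAT0Space_of_convex {E : Type*} [NormedAddCommGroup E] [InnerProductSpace ℝ E] {S : Set E}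
    (hS : Convex ℝ S) : IsCAT0Space S := by
  rw [isCAT0Space_iff_exists_isCNPoint]
  rintro ⟨x, hx⟩ ⟨y, hy⟩ t ht
  refine ⟨⟨(1 - t) • x + t • y, hS hx hy (sub_nonneg.2 ht.2) ht.1 (sub_add_cancel 1 t)⟩, ?_⟩
  rintro ⟨z, hz⟩
  have hzw : z - ((1 - t) • x + t • y) = (1 - t) • (z - x) + t • (z - y) := by module
  have hxy : x - y = (z - y) - (z - x) := by abel
  simp only [Subtype.dist_eq, dist_eq_norm]
  rw [hzw, hxy]
  generalize z - x = u, z - y = v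
  rw [norm_add_sq_real, norm_sub_sq_real, norm_smul, norm_smul, mul_pow, mul_pow, Real.norm_eq_abs,
    Real.norm_eq_abs, sq_abs, sq_abs, real_inner_smul_left, real_inner_smul_right,
    real_inner_comm u v]
  apply le_of_eq
  ring

end CAT0

section Wedge

open scoped Topology

/-- The family `f` exhibits `W` as the wedge of the pointed spaces `(Y i, a i)` glued at their base
points: the branches `f i` cover `W`, and the path between two different branches passes through
the common base point `p`. -/
structure IsWedge {I : Type*} {Y : I → Type*} [∀ i, MetricSpace (Y i)] (a : ∀ i, Y i)
    {W : Type*} [MetricSpace W] (p : W) (f : ∀ i, Y i → W) : Prop where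
  isometry : ∀ i, Isometry (f i)
  map_base : ∀ i, f i (a i) = p
  exists_eq : ∀ w, ∃ i y, f i y = w
  dist_eq_add : ∀ i j, i ≠ j → ∀ x y, dist (f i x) (f j y) = dist (a i) x + dist (a j) y

theorem isCompact_iUnion_of_eventually_subset {I X : Type*} [TopologicalSpace X] {C : I → Set X}
    {p : X} (hC : ∀ i, IsCompact (C i)) (hp : p ∈ ⋃ i, C i)
    (h : ∀ U ∈ 𝓝 p, ∀ᶠ i in Filter.cofinite, C i ⊆ U) : IsCompact (⋃ i, C i) := by
  rw [isCompact_iff_ultrafilter_le_nhds]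
  intro F hF
  rw [Filter.le_principal_iff] at hF
  by_cases hex : ∃ i, C i ∈ F
  · obtain ⟨i, hi⟩ := hex
    obtain ⟨x, hx, hFx⟩ := isCompact_iff_ultrafilter_le_nhds.1 (hC i) F
      (Filter.le_principal_iff.2 hi)
    exact ⟨x, Set.mem_iUnion_of_mem i hx, hFx⟩
  · refine ⟨p, hp, fun U hU => ?_⟩
    have hfinite : (⋃ i ∈ {i | ¬ C i ⊆ U}, C i) ∉ F := by
      rw [Ultrafilter.finite_biUnion_mem_iff (Filter.eventually_cofinite.1 (h U hU))]
      exact fun ⟨i, _, hi⟩ => hex ⟨i, hi⟩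
    filter_upwards [hF, Ultrafilter.compl_mem_iff_notMem.2 hfinite] with x hx hxU
    obtain ⟨i, hi⟩ := Set.mem_iUnion.1 hx
    by_contra hx'
    exact hxU (Set.mem_biUnion (fun hCU => hx' (hCU hi)) hi)

namespace IsWedge

variable {I : Type*} {Y : I → Type*} [∀ i, MetricSpace (Y i)] {a : ∀ i, Y i}
  {W : Type*} [MetricSpace W] {p : W} {f : ∀ i, Y i → W}

theorem dist_base (hW : IsWedge a p f) (i : I) (y : Y i) : dist p (f i y) = dist (a i) y := by
  rw [← hW.map_base i, (hW.isometry i).dist_eq]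

theorem dist_eq_add_dist_base (hW : IsWedge a p f) {i j : I} (hij : i ≠ j) (x : Y i) (y : Y j) :
    dist (f i x) (f j y) = dist (f i x) p + dist (f j y) p := by
  rw [hW.dist_eq_add i j hij, dist_comm _ p, dist_comm _ p, hW.dist_base, hW.dist_base]

theorem isCNPoint_map (hW : IsWedge a p f) {i : I} {x y w : Y i} {t : ℝ}
    (hw : IsCNPoint t x y w) (ht : t ∈ Set.Icc (0 : ℝ) 1) :
    IsCNPoint t (f i x) (f i y) (f i w) := fun z => by
  obtain ⟨k, z, rfl⟩ := hW.exists_eq z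
  rw [(hW.isometry i).dist_eq]
  rcases eq_or_ne k i with rfl | hk
  · simpa only [(hW.isometry k).dist_eq] using hw z
  · simp only [hW.dist_eq_add k i hk]
    have hconv := mul_le_mul_of_nonneg_left (hw.dist_le ht (a i)) (dist_nonneg (x := a k) (y := z))
    linarith [hw (a i)]

theorem exists_isCNPoint_base (hW : IsWedge a p f) {i j : I} (hij : i ≠ j) (x : Y i) (y : Y j) :
    ∃ τ ∈ Set.Icc (0 : ℝ) 1, IsCNPoint τ (f i x) (f j y) p := by
  have hD := hW.dist_eq_add_dist_base hij x y
  have hA : 0 ≤ dist (f i x) p := dist_nonneg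
  have hB : 0 ≤ dist (f j y) p := dist_nonneg
  have hτ : dist (f i x) p / dist (f i x) (f j y) * dist (f i x) (f j y) = dist (f i x) p :=
    div_mul_cancel_of_imp fun h0 => by linarith
  have hτ01 : dist (f i x) p / dist (f i x) (f j y) ∈ Set.Icc (0 : ℝ) 1 :=
    ⟨div_nonneg hA dist_nonneg, div_le_one_of_le₀ (by linarith) dist_nonneg⟩
  refine ⟨_, hτ01, IsCNPoint.of_dist_eq_add hτ01 hτ.symm (by linarith) fun z => ?_⟩
  obtain ⟨k, z, rfl⟩ := hW.exists_eq z
  rcases eq_or_ne k j with rfl | hk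
  · exact Or.inr (hW.dist_eq_add_dist_base hij.symm z x)
  · exact Or.inl (hW.dist_eq_add_dist_base hk z y)

theorem isCAT0Space (hW : IsWedge a p f) (hY : ∀ i, IsCAT0Space (Y i)) : IsCAT0Space W := by
  simp only [isCAT0Space_iff_exists_isCNPoint] at hY ⊢
  have hbranch : ∀ i, ∀ x y : Y i, ∀ s ∈ Set.Icc (0 : ℝ) 1, ∃ w, IsCNPoint s (f i x) (f i y) w := by
    intro i x y s hs
    obtain ⟨w, hw⟩ := hY i x y s hs
    exact ⟨f i w, hW.isCNPoint_map hw hs⟩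
  intro x y t ht
  obtain ⟨i, x, rfl⟩ := hW.exists_eq x
  obtain ⟨j, y, rfl⟩ := hW.exists_eq y
  rcases eq_or_ne i j with rfl | hij
  · exact hbranch i x y t ht
  · obtain ⟨τ, hτ, hp⟩ := hW.exists_isCNPoint_base hij x y
    refine hp.exists_of_exists hτ ?_ ?_ ht
    · simpa only [hW.map_base] using hbranch i x (a i)
    · simpa only [hW.map_base] using hbranch j y (a j)

theorem closedBall_eq_iUnion (hW : IsWedge a p f) (R : ℝ) :
    Metric.closedBall p R = ⋃ i, f i '' Metric.closedBall (a i) R := by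
  ext w
  simp only [Metric.mem_closedBall', Set.mem_iUnion, Set.mem_image]
  constructor
  · intro hw
    obtain ⟨i, y, rfl⟩ := hW.exists_eq w
    exact ⟨i, y, hW.dist_base i y ▸ hw, rfl⟩
  · rintro ⟨i, y, hy, rfl⟩
    exact (hW.dist_base i y).trans_le hy

theorem properSpace (hW : IsWedge a p f) [∀ i, ProperSpace (Y i)]
    (hsmall : ∀ δ > 0, ∀ᶠ i in Filter.cofinite, ∀ y, dist (a i) y ≤ δ) : ProperSpace W := by
  refine ProperSpace.of_seq_closedBall (x := p) Filter.tendsto_id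
    ((Filter.eventually_ge_atTop 0).mono fun R hR => ?_)
  rw [hW.closedBall_eq_iUnion]
  refine isCompact_iUnion_of_eventually_subset
    (fun i => (isCompact_closedBall _ _).image (hW.isometry i).continuous)
    (hW.closedBall_eq_iUnion R ▸ Metric.mem_closedBall_self hR) fun U hU => ?_
  obtain ⟨δ, hδ, hδU⟩ := Metric.nhds_basis_closedBall.mem_iff.1 hU
  filter_upwards [hsmall δ hδ] with i hi
  rintro _ ⟨y, -, rfl⟩
  exact hδU (Metric.mem_closedBall'.2 ((hW.dist_base i y).trans_le (hi y)))

end IsWedge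

section Construction

variable {I : Type*} {Y : I → Type*}

/-- The wedge of the pointed sets `(Y i, a i)`, realised as the union of the coordinate axes through
`a` in the product of the `Y i`. -/
def Wedge (a : ∀ i, Y i) : Type _ :=
  {x : ∀ i, Y i // ∃ i, ∀ j ≠ i, x j = a j}

namespace Wedge

variable {a : ∀ i, Y i}

open Classical in
/-- The inclusion of the `i`-th branch in the wedge. -/
noncomputable def inclusion (a : ∀ i, Y i) (i : I) (y : Y i) : Wedge a :=
  ⟨Function.update a i y, i, fun _ hj => Function.update_of_ne hj _ _⟩

theorem inclusion_self (i : I) (y : Y i) : (inclusion a i y).1 i = y := by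
  classical exact Function.update_self i y a

theorem inclusion_of_ne {i j : I} (hj : j ≠ i) (y : Y i) : (inclusion a i y).1 j = a j := by
  classical exact Function.update_of_ne hj y a

theorem exists_inclusion_eq (x : Wedge a) : ∃ i y, inclusion a i y = x := by
  obtain ⟨x, i, hx⟩ := x
  refine ⟨i, x i, Subtype.ext (funext fun j => ?_)⟩
  rcases eq_or_ne j i with rfl | hj
  · exact inclusion_self j _
  · exact (inclusion_of_ne hj _).trans (hx j hj).symm

theorem inclusion_base (i j : I) : inclusion a i (a i) = inclusion a j (a j) := by
  classical
  exact Subtype.ext ((Function.update_eq_self i a).trans (Function.update_eq_self j a).symm)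

variable [∀ i, MetricSpace (Y i)]

/-- The `ℓ¹` distance on the wedge. It is finite because a point of the wedge differs from the base
point in at most one coordinate. -/
noncomputable instance : EMetricSpace (Wedge a) where
  edist x y := ∑' i, edist (x.1 i) (y.1 i)
  edist_self x := by simp only [edist_self, tsum_zero]
  edist_comm x y := by simp only [edist_comm]
  edist_triangle x y z := by
    rw [← ENNReal.tsum_add]
    exact ENNReal.tsum_le_tsum fun i => edist_triangle _ _ _
  eq_of_edist_eq_zero h :=
    Subtype.ext (funext fun i => edist_eq_zero.1 (ENNReal.tsum_eq_zero.1 h i))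

theorem edist_def (x y : Wedge a) : edist x y = ∑' i, edist (x.1 i) (y.1 i) := rfl

theorem edist_inclusion (i : I) (x y : Y i) :
    edist (inclusion a i x) (inclusion a i y) = edist x y := by
  rw [edist_def, tsum_eq_single i]
  · simp only [inclusion_self]
  · intro j hj
    simp only [inclusion_of_ne hj, edist_self]

theorem edist_inclusion_of_ne {i j : I} (hij : i ≠ j) (x : Y i) (y : Y j) :
    edist (inclusion a i x) (inclusion a j y) = edist (a i) x + edist (a j) y := by
  classical
  rw [edist_def, tsum_eq_sum (s := {i, j}), Finset.sum_pair hij]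
  · simp only [inclusion_self, inclusion_of_ne hij, inclusion_of_ne hij.symm, edist_comm x]
  · intro k hk
    rw [Finset.mem_insert, Finset.mem_singleton, not_or] at hk
    simp only [inclusion_of_ne hk.1, inclusion_of_ne hk.2, edist_self]

noncomputable instance : MetricSpace (Wedge a) :=
  EMetricSpace.toMetricSpace fun x y => by
    obtain ⟨i, x, rfl⟩ := exists_inclusion_eq x
    obtain ⟨j, y, rfl⟩ := exists_inclusion_eq y
    rcases eq_or_ne i j with rfl | hij
    · exact (edist_inclusion i x y).trans_ne (edist_ne_top x y)
    · exact (edist_inclusion_of_ne hij x y).trans_ne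
        (ENNReal.add_ne_top.2 ⟨edist_ne_top _ _, edist_ne_top _ _⟩)

theorem isWedge (a : ∀ i, Y i) (i₀ : I) :
    IsWedge a (inclusion a i₀ (a i₀)) (inclusion a) where
  isometry i := edist_inclusion i
  map_base i := inclusion_base i i₀
  exists_eq := exists_inclusion_eq
  dist_eq_add i j hij x y := by
    rw [dist_edist, edist_inclusion_of_ne hij, ENNReal.toReal_add (edist_ne_top _ _)
      (edist_ne_top _ _), ← dist_edist, ← dist_edist]

end Wedge

end Construction

end Wedge

section Truncation

open scoped ENNReal Topology

variable {I : Type*} {Y : I → Type*} [∀ i, MetricSpace (Y i)] {a : ∀ i, Y i}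
  {W : Type*} [MetricSpace W] {p : W} {f : ∀ i, Y i → W}

/-- The part of a wedge with branches `f i` that is kept after cutting the `i`-th branch at distance
`r i` from the base point; a branch is left whole if `r i = ∞`. -/
def truncation (a : ∀ i, Y i) (f : ∀ i, Y i → W) (r : I → ℝ≥0∞) : Set W :=
  ⋃ i, f i '' Metric.closedEBall (a i) (r i)

namespace IsWedge

theorem map_mem_truncation (hW : IsWedge a p f) {r : I → ℝ≥0∞} {i : I} {y : Y i} :
    f i y ∈ truncation a f r ↔ edist y (a i) ≤ r i := by
  simp only [truncation, Set.mem_iUnion, Set.mem_image, Metric.mem_closedEBall]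
  refine ⟨?_, fun h => ⟨i, y, h, rfl⟩⟩
  rintro ⟨j, z, hz, hzy⟩
  rcases eq_or_ne j i with rfl | hji
  · exact (hW.isometry j).injective hzy ▸ hz
  · have hy : dist (a i) y = 0 := by
      have := hW.dist_eq_add j i hji z y
      rw [hzy, dist_self] at this
      linarith [dist_nonneg (x := a j) (y := z), dist_nonneg (x := a i) (y := y)]
    rw [dist_eq_zero.1 hy, edist_self]
    exact zero_le

theorem base_mem_truncation [Nonempty I] (hW : IsWedge a p f) (r : I → ℝ≥0∞) :
    p ∈ truncation a f r := by
  obtain ⟨i⟩ := ‹Nonempty I›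
  rw [← hW.map_base i, hW.map_mem_truncation, edist_self]
  exact zero_le

variable {r r' : I → ℝ≥0∞}

theorem isWedge_truncation [Nonempty I] (hW : IsWedge a p f) (r : I → ℝ≥0∞) :
    IsWedge (fun i => (⟨a i, Metric.mem_closedEBall_self⟩ : Metric.closedEBall (a i) (r i)))
      (⟨p, hW.base_mem_truncation r⟩ : truncation a f r)
      fun i y => ⟨f i y, hW.map_mem_truncation.2 y.2⟩ where
  isometry i y z := hW.isometry i y z
  map_base i := Subtype.ext (hW.map_base i)
  exists_eq := by
    rintro ⟨w, hw⟩
    obtain ⟨i, y, hy, rfl⟩ := Set.mem_iUnion.1 hw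
    exact ⟨i, ⟨y, hy⟩, rfl⟩
  dist_eq_add i j hij x y := hW.dist_eq_add i j hij x y

theorem isCAT0Space_truncation [Nonempty I] (hW : IsWedge a p f) (hY : ∀ i, IsCAT0Space (Y i))
    (r : I → ℝ≥0∞) : IsCAT0Space (truncation a f r) :=
  (hW.isWedge_truncation r).isCAT0Space fun i => (hY i).closedEBall (a i) (r i)

theorem properSpace_truncation [Nonempty I] (hW : IsWedge a p f) [∀ i, ProperSpace (Y i)]
    (hr : ∀ δ > 0, ∀ᶠ i in Filter.cofinite, r i ≤ δ) : ProperSpace (truncation a f r) := by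
  have (i : I) : ProperSpace (Metric.closedEBall (a i) (r i)) :=
    .of_isClosed Metric.isClosed_closedEBall
  refine (hW.isWedge_truncation r).properSpace fun δ hδ => ?_
  filter_upwards [hr (ENNReal.ofReal δ) (ENNReal.ofReal_pos.2 hδ)] with i hi y
  rw [← edist_le_ofReal hδ.le]
  exact (Metric.mem_closedEBall'.1 y.2).trans hi

theorem exists_mem_truncation_dist_le (hW : IsWedge a p f) (hY : ∀ i, IsGeodesicSpace (Y i))
    {R δ : ℝ} (hδ : 0 ≤ δ)
    (hr : ∀ i, min (ENNReal.ofReal R) (r i) ≤ r' i + ENNReal.ofReal δ) {w : W}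
    (hw : w ∈ truncation a f r) (hwR : dist p w ≤ R) :
    ∃ w' ∈ truncation a f r', dist w w' ≤ δ := by
  obtain ⟨i, y, rfl⟩ := hW.exists_eq w
  rw [hW.map_mem_truncation, edist_comm, edist_dist] at hw
  rw [hW.dist_base] at hwR
  obtain ⟨y', hay', hy'y⟩ := (hY i).exists_dist_eq (a i) y (s := max (dist (a i) y - δ) 0)
    (le_max_right _ _) (max_le (sub_le_self _ hδ) dist_nonneg)
  refine ⟨f i y', ?_, ?_⟩
  · rw [hW.map_mem_truncation, edist_comm, edist_dist, hay', ENNReal.ofReal_max,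
      ENNReal.ofReal_zero, max_eq_left zero_le, ENNReal.ofReal_sub _ hδ, tsub_le_iff_right]
    exact (le_min (ENNReal.ofReal_le_ofReal hwR) hw).trans (hr i)
  · rw [(hW.isometry i).dist_eq, dist_comm, hy'y]
    linarith [le_max_left (dist (a i) y - δ) 0]

end IsWedge

theorem eventually_forall_min_le_add {Q : Type*} [TopologicalSpace Q] {r : Q → I → ℝ≥0∞}
    (hcont : ∀ i, Continuous fun q => r q i)
    (hsmall : ∀ δ > 0, ∀ᶠ i in Filter.cofinite, ∀ q, r q i ≤ δ) (q₀ : Q) {R δ : ℝ≥0∞}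
    (hR : R ≠ ∞) (hδ : 0 < δ) :
    ∀ᶠ q in 𝓝 q₀, ∀ i, min R (r q₀ i) ≤ r q i + δ ∧ min R (r q i) ≤ r q₀ i + δ := by
  have hclose (i : I) :
      ∀ᶠ q in 𝓝 q₀, min R (r q₀ i) ≤ r q i + δ ∧ min R (r q i) ≤ r q₀ i + δ := by
    have hmin : Filter.Tendsto (fun q => min R (r q i)) (𝓝 q₀) (𝓝 (min R (r q₀ i))) :=
      (continuous_const.min (hcont i)).tendsto q₀
    filter_upwards [(ENNReal.tendsto_nhds (min_lt_of_left_lt hR.lt_top).ne).1 hmin δ hδ] with q hq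
    exact ⟨(tsub_le_iff_right.1 hq.1).trans (add_le_add_left (min_le_right _ _) δ),
      hq.2.trans (add_le_add_left (min_le_right _ _) δ)⟩
  have hfinite : {i | ¬ ∀ q, r q i ≤ δ}.Finite := Filter.eventually_cofinite.1 (hsmall δ hδ)
  filter_upwards [(hfinite.eventually_all).2 fun i _ => hclose i] with q hq i
  by_cases hi : ∀ q, r q i ≤ δ
  · exact ⟨(min_le_right _ _).trans ((hi q₀).trans le_add_self),
      (min_le_right _ _).trans ((hi q).trans le_add_self)⟩
  · exact hq i hi

end Truncation

section PointedApprox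

open scoped Topology

variable {X Y Z : Type*} [MetricSpace X] [MetricSpace Y] [MetricSpace Z]

/-- `g x y` is the distance from `x` to `y` for some pseudometric on `X ⊕ Y` that restricts to the
given metrics on `X` and `Y`. -/
structure IsCoupling (g : X → Y → ℝ) : Prop where
  le_dist_add : ∀ x x' y, g x y ≤ dist x x' + g x' y
  le_add_dist : ∀ x y y', g x y ≤ g x y' + dist y' y
  dist_le_left : ∀ x x' y, dist x x' ≤ g x y + g x' y
  dist_le_right : ∀ x y y', dist y y' ≤ g x y + g x y'

namespace IsCoupling

variable {g : X → Y → ℝ} {g' : Y → Z → ℝ}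

theorem nonneg (hg : IsCoupling g) (x : X) (y : Y) : 0 ≤ g x y := by
  linarith [hg.dist_le_left x x y, dist_self x]

theorem add_const (hg : IsCoupling g) {η : ℝ} (hη : 0 ≤ η) :
    IsCoupling fun x y => g x y + η where
  le_dist_add x x' y := by linarith [hg.le_dist_add x x' y]
  le_add_dist x y y' := by linarith [hg.le_add_dist x y y']
  dist_le_left x x' y := by linarith [hg.dist_le_left x x' y]
  dist_le_right x y y' := by linarith [hg.dist_le_right x y y']

theorem bddBelow_range_add (hg : IsCoupling g) (hg' : IsCoupling g') (x : X) (z : Z) :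
    BddBelow (Set.range fun y => g x y + g' y z) :=
  ⟨0, Set.forall_mem_range.2 fun y => add_nonneg (hg.nonneg x y) (hg'.nonneg y z)⟩

theorem comp [Nonempty Y] (hg : IsCoupling g) (hg' : IsCoupling g') :
    IsCoupling fun x z => ⨅ y, g x y + g' y z where
  le_dist_add x x' z := by
    rw [← sub_le_iff_le_add']
    refine le_ciInf fun y => ?_
    linarith [ciInf_le (hg.bddBelow_range_add hg' x z) y, hg.le_dist_add x x' y]
  le_add_dist x z z' := by
    rw [← sub_le_iff_le_add]
    refine le_ciInf fun y => ?_
    linarith [ciInf_le (hg.bddBelow_range_add hg' x z) y, hg'.le_add_dist y z z']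
  dist_le_left x x' z := le_ciInf_add_ciInf fun y y' => by
    linarith [hg.dist_le_left x x' y, hg.le_add_dist x' y y', hg'.dist_le_left y' y z]
  dist_le_right x z z' := le_ciInf_add_ciInf fun y y' => by
    linarith [hg'.dist_le_right y z z', hg'.le_dist_add y y' z', hg.dist_le_right x y y']

end IsCoupling

/-- The distance function on `X ⊕ Y` whose values across the two summands are given by `g`. -/
def couplingDist (g : X → Y → ℝ) : X ⊕ Y → X ⊕ Y → ℝ :=
  Sum.elim (fun x => Sum.elim (dist x) (g x)) fun y => Sum.elim (fun x => g x y) (dist y)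

/-- The closed balls of radius `R` around `a` and `b` are `δ`-close to the other space, and `a`
is `δ`-close to `b`, for some coupling of `X` and `Y`. In contrast to `IsAdmissiblePair`, the radius
and the error are independent and the coupling may have zeros. -/
def PointedApprox (R δ : ℝ) (a : X) (b : Y) : Prop :=
  ∃ g : X → Y → ℝ, IsCoupling g ∧ g a b ≤ δ ∧
    (∀ x, dist a x ≤ R → ∃ y, g x y ≤ δ) ∧ ∀ y, dist b y ≤ R → ∃ x, g x y ≤ δ

variable {a : X} {b : Y} {c : Z} {R R' R'' δ δ' δ'' t : ℝ}

theorem IsAdmissiblePair.pointedApprox {h : X ⊕ Y → X ⊕ Y → ℝ} (hh : IsAdmissiblePair a b t h) :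
    PointedApprox t⁻¹ t a b := by
  obtain ⟨-, hsymm, htri, hX, hY, hab, ha, hb⟩ := hh
  refine ⟨fun x y => h (.inl x) (.inr y), ⟨?_, ?_, ?_, ?_⟩, hab.le, ?_, ?_⟩
  · intro x x' y
    exact hX x x' ▸ htri _ _ _
  · intro x y y'
    exact hY y' y ▸ htri _ _ _
  · intro x x' y
    rw [← hX, hsymm (.inl x')]
    exact htri _ _ _
  · intro x y y'
    rw [← hY, hsymm (.inl x) (.inr y)]
    exact htri _ _ _
  · intro x hx
    obtain ⟨y, hy⟩ := ha (.inl x) (hX a x ▸ hx)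
    exact ⟨y, hy.le⟩
  · intro y hy
    obtain ⟨x, hx⟩ := hb (.inr y) (hY b y ▸ hy)
    exact ⟨x, (hsymm _ _).trans_le hx.le⟩

theorem IsCoupling.isAdmissiblePair {g : X → Y → ℝ} (hg : IsCoupling g) (hpos : ∀ x y, 0 < g x y)
    (hab : g a b < t) (ha : ∀ x, dist a x ≤ t⁻¹ → ∃ y, g x y < t)
    (hb : ∀ y, dist b y ≤ t⁻¹ → ∃ x, g x y < t) : IsAdmissiblePair a b t (couplingDist g) := by
  have ht : 0 < t := (hpos a b).trans hab
  refine ⟨?_, ?_, ?_, fun _ _ => rfl, fun _ _ => rfl, hab, ?_, ?_⟩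
  · rintro (x | y) (x' | y')
    · exact dist_eq_zero.trans Sum.inl_injective.eq_iff.symm
    · exact iff_of_false (hpos x y').ne' Sum.inl_ne_inr
    · exact iff_of_false (hpos x' y).ne' Sum.inr_ne_inl
    · exact dist_eq_zero.trans Sum.inr_injective.eq_iff.symm
  · rintro (x | y) (x' | y')
    exacts [dist_comm x x', rfl, rfl, dist_comm y y']
  · rintro (x | y) (x' | y') (x'' | y'')
    · exact dist_triangle x x' x''
    · exact hg.le_dist_add x x' y''
    · exact hg.dist_le_left x x'' y'
    · exact hg.le_add_dist x y'' y'
    · exact (hg.le_dist_add x'' x' y).trans_eq (by rw [dist_comm, add_comm]; rfl)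
    · exact hg.dist_le_right x' y y''
    · exact (hg.le_add_dist x'' y y').trans_eq (by rw [dist_comm, add_comm]; rfl)
    · exact dist_triangle y y' y''
  · rintro (x | y) hx
    exacts [ha x hx, ⟨y, (dist_self y).trans_lt ht⟩]
  · rintro (x | y) hy
    exacts [⟨x, (dist_self x).trans_lt ht⟩, hb y hy]

theorem pghDistOf_le_of_mem
    (ht : t ∈ insert (1 / 2 : ℝ) {t | 0 < t ∧ ∃ h, IsAdmissiblePair a b t h}) :
    pghDistOf X Y a b ≤ t := by
  refine csInf_le ⟨0, ?_⟩ ht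
  rintro s (rfl | hs)
  exacts [by norm_num, hs.1.le]

theorem PointedApprox.pghDistOf_le (h : PointedApprox t⁻¹ t a b) (ht : 0 < t) :
    pghDistOf X Y a b ≤ t := by
  obtain ⟨g, hg, hab, ha, hb⟩ := h
  refine le_of_forall_pos_lt_add fun η hη => ?_
  have hinv : (t + η / 2)⁻¹ ≤ t⁻¹ := inv_anti₀ ht (by linarith)
  have hadm : IsAdmissiblePair a b (t + η / 2) (couplingDist fun x y => g x y + η / 4) := by
    refine (hg.add_const (by positivity)).isAdmissiblePair
      (fun x y => by linarith [hg.nonneg x y]) (by linarith) (fun x hx => ?_) fun y hy => ?_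
    · obtain ⟨y, hy⟩ := ha x (hx.trans hinv)
      exact ⟨y, by linarith⟩
    · obtain ⟨x, hx⟩ := hb y (hy.trans hinv)
      exact ⟨x, by linarith⟩
  linarith [pghDistOf_le_of_mem (Or.inr ⟨by positivity, _, hadm⟩)]

theorem PointedApprox.trans (h : PointedApprox R δ a b) (h' : PointedApprox R' δ' b c)
    (hR : R'' + 2 * δ' ≤ R) (hR' : R'' + 2 * δ ≤ R') (hδ : δ + δ' ≤ δ'') :
    PointedApprox R'' δ'' a c := by
  obtain ⟨g, hg, hab, ha, hb⟩ := h
  obtain ⟨g', hg', hbc, hb', hc⟩ := h'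
  have : Nonempty Y := ⟨b⟩
  have hle {x : X} {y : Y} {z : Z} (hxy : g x y ≤ δ) (hyz : g' y z ≤ δ') :
      ⨅ y, g x y + g' y z ≤ δ'' :=
    (ciInf_le (hg.bddBelow_range_add hg' x z) y).trans (by linarith)
  refine ⟨_, hg.comp hg', hle hab hbc, fun x hx => ?_, fun z hz => ?_⟩
  · obtain ⟨y, hy⟩ := ha x (by linarith [hg'.nonneg b c])
    obtain ⟨z, hz⟩ := hb' y (by linarith [hg.dist_le_right a b y, hg.le_dist_add a x y])
    exact ⟨z, hle hy hz⟩
  · obtain ⟨y, hy⟩ := hc z (by linarith [hg.nonneg a b])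
    obtain ⟨x, hx⟩ := hb y
      (by linarith [hg'.dist_le_left b y c, hg'.le_add_dist y c z, dist_comm z c])
    exact ⟨x, hle hx hy⟩

theorem pointedApprox_subtype {K K' : Set X} {p : X} (hp : p ∈ K) (hp' : p ∈ K') (hδ : 0 ≤ δ)
    (h : ∀ x ∈ K, dist p x ≤ R → ∃ y ∈ K', dist x y ≤ δ)
    (h' : ∀ y ∈ K', dist p y ≤ R → ∃ x ∈ K, dist y x ≤ δ) :
    PointedApprox R δ (⟨p, hp⟩ : K) (⟨p, hp'⟩ : K') := by
  refine ⟨fun x y => dist (x : X) y, ⟨?_, ?_, ?_, ?_⟩, (dist_self p).trans_le hδ, ?_, ?_⟩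
  · exact fun x x' y => dist_triangle _ _ _
  · exact fun x y y' => dist_triangle _ _ _
  · exact fun x x' y => dist_triangle_right (x : X) x' y
  · exact fun x y y' => dist_triangle_left (y : X) y' x
  · rintro ⟨x, hx⟩ hpx
    obtain ⟨y, hy, hxy⟩ := h x hx hpx
    exact ⟨⟨y, hy⟩, hxy⟩
  · rintro ⟨y, hy⟩ hpy
    obtain ⟨x, hx, hyx⟩ := h' y hy hpy
    exact ⟨⟨x, hx⟩, (dist_comm _ _).trans_le hyx⟩

theorem continuous_of_eventually_pointedApprox {Q : Type*} [TopologicalSpace Q]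
    {G : Q → PointedProperMetricSpace}
    (h : ∀ q₀, ∀ R, ∀ δ > 0, ∀ᶠ q in 𝓝 q₀, PointedApprox R δ (G q₀).pt (G q).pt) :
    Continuous G := by
  refine continuous_generateFrom_iff.2 ?_
  rintro _ ⟨P, ε, -, rfl⟩
  refine isOpen_iff_eventually.2 fun q₀ (hq₀ : pghDist P (G q₀) < ε) => ?_
  obtain ⟨t, ht, htε⟩ := exists_lt_of_csInf_lt (Set.insert_nonempty _ _) hq₀
  rcases ht with rfl | ⟨ht, k, hk⟩
  · exact Filter.Eventually.of_forall fun q => (pghDistOf_le_of_mem (Or.inl rfl)).trans_lt htε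
  obtain ⟨t', htt', ht'ε⟩ := exists_between htε
  have hinv : t'⁻¹ < t⁻¹ := inv_strictAnti₀ ht htt'
  filter_upwards [h q₀ (t'⁻¹ + 2 * t) (min (t' - t) ((t⁻¹ - t'⁻¹) / 2))
    (lt_min (by linarith) (by linarith))] with q hq
  have happrox : PointedApprox t'⁻¹ t' P.pt (G q).pt := hk.pointedApprox.trans hq
    (by linarith [min_le_right (t' - t) ((t⁻¹ - t'⁻¹) / 2)]) le_rfl
    (by linarith [min_le_left (t' - t) ((t⁻¹ - t'⁻¹) / 2)])
  exact (happrox.pghDistOf_le (ht.trans htt')).trans_lt ht'ε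

end PointedApprox

namespace PGHSpace

variable {X Y : Type} [MetricSpace X] [ProperSpace X] [MetricSpace Y] [ProperSpace Y]
  {a : X} {b : Y}

theorem mk_eq_mk_iff : mk X a = mk Y b ↔ ∃ e : X ≃ᵢ Y, e a = b :=
  Quotient.eq

theorem mk_mem_PGHCat0 (hX : IsCAT0Space X) (a : X) : mk X a ∈ PGHCat0 := by
  obtain ⟨e, -⟩ := Quotient.exact (Quotient.out_eq (mk X a))
  exact hX.of_isometryEquiv e.symm

end PGHSpace

section ChordRatio

open scoped ENNReal Topology

variable {X Y : Type*} [MetricSpace X] [MetricSpace Y] {a x : X} {c : ℝ} {f : X → Y}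

/-- The point `a` does not lie between `y` and `z`. In a wedge with base point `a` this puts `y` and
`z` on the same branch. -/
def Linked (a y z : X) : Prop :=
  dist y z < dist y a + dist a z

/-- The lengths of the chords of the sphere around `a` through `y`, restricted to the part of that
sphere that is linked to `y`. -/
def chordLengths (a y : X) : Set ℝ :=
  {d | ∃ z w, dist a z = dist a y ∧ dist a w = dist a y ∧ Linked a y z ∧ Linked a y w ∧
    dist z w = d}

/-- Near `x`, the longest linked chords of the spheres around `a` are `c` times the radius. The
number `c` plays the role of the opening angle at `a` of the branch of `x`, and is determined by
arbitrarily small neighbourhoods of `x`. -/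
def HasChordRatio (c : ℝ) (a x : X) : Prop :=
  ∀ᶠ y in 𝓝 x, IsGreatest (chordLengths a y) (c * dist a y)

/-- The chord ratios of all points other than `a`: an invariant of the pointed space `(X, a)`. -/
def chordRatios (a : X) : Set ℝ :=
  {c | ∃ x ≠ a, HasChordRatio c a x}

theorem hasChordRatio_of_forall_isGreatest
    (h : ∀ y ≠ a, IsGreatest (chordLengths a y) (c * dist a y)) (hx : x ≠ a) :
    HasChordRatio c a x :=
  (eventually_ne_nhds hx).mono h

theorem HasChordRatio.unique {c' : ℝ} (h : HasChordRatio c a x) (h' : HasChordRatio c' a x)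
    (hx : x ≠ a) : c = c' :=
  mul_right_cancel₀ (dist_ne_zero.2 hx.symm) (h.self_of_nhds.unique h'.self_of_nhds)

theorem countable_chordRatios [TopologicalSpace.SeparableSpace X] (a : X) :
    (chordRatios a).Countable := by
  have hdisj : (chordRatios a).PairwiseDisjoint fun c => {x | x ≠ a ∧ HasChordRatio c a x} :=
    fun c _ c' _ hcc' => Set.disjoint_left.2 fun x hx hx' => hcc' (hx.2.unique hx'.2 hx.1)
  exact hdisj.countable_of_isOpen (fun c _ => isOpen_ne.inter isOpen_setOfPred_eventually_nhds)
    fun c hc => hc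

/-- An isometric embedding of `X` whose image contains, with each of its points, all points linked
to it at the same distance from the image of `a`. Such embeddings preserve chord lengths. -/
structure IsBranchEmbedding (a : X) (f : X → Y) : Prop where
  isometry : Isometry f
  mem_range : ∀ y z, dist (f a) z = dist a y → Linked (f a) (f y) z → z ∈ Set.range f

namespace IsBranchEmbedding

theorem chordLengths_map (hf : IsBranchEmbedding a f) (y : X) :
    chordLengths (f a) (f y) = chordLengths a y := by
  have hlinked (z : X) : Linked (f a) (f y) (f z) ↔ Linked a y z := by
    simp only [Linked, hf.isometry.dist_eq]
  ext d
  constructor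
  · rintro ⟨z, w, hz, hw, hyz, hyw, hzw⟩
    rw [hf.isometry.dist_eq a y] at hz hw
    obtain ⟨z, rfl⟩ := hf.mem_range y z hz hyz
    obtain ⟨w, rfl⟩ := hf.mem_range y w hw hyw
    rw [hf.isometry.dist_eq] at hz hw hzw
    exact ⟨z, w, hz, hw, (hlinked z).1 hyz, (hlinked w).1 hyw, hzw⟩
  · rintro ⟨z, w, hz, hw, hyz, hyw, hzw⟩
    exact ⟨f z, f w, by simpa only [hf.isometry.dist_eq], by simpa only [hf.isometry.dist_eq],
      (hlinked z).2 hyz, (hlinked w).2 hyw, by rwa [hf.isometry.dist_eq]⟩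

theorem isGreatest_chordLengths_map_iff (hf : IsBranchEmbedding a f) (y : X) :
    IsGreatest (chordLengths (f a) (f y)) (c * dist (f a) (f y)) ↔
      IsGreatest (chordLengths a y) (c * dist a y) := by
  rw [hf.chordLengths_map, hf.isometry.dist_eq]

theorem hasChordRatio_of_map (hf : IsBranchEmbedding a f) (h : HasChordRatio c (f a) (f x)) :
    HasChordRatio c a x :=
  (hf.isometry.continuous.tendsto x |>.eventually h).mono fun y hy =>
    (hf.isGreatest_chordLengths_map_iff y).1 hy

theorem hasChordRatio_map (hf : IsBranchEmbedding a f) (hx : Set.range f ∈ 𝓝 (f x))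
    (h : HasChordRatio c a x) : HasChordRatio c (f a) (f x) := by
  rw [HasChordRatio, ← hf.isometry.isEmbedding.map_nhds_of_mem x hx, Filter.eventually_map]
  exact h.mono fun y hy => (hf.isGreatest_chordLengths_map_iff y).2 hy

end IsBranchEmbedding

theorem isBranchEmbedding_isometryEquiv (e : X ≃ᵢ Y) (a : X) : IsBranchEmbedding a e :=
  ⟨e.isometry, fun _ z _ _ => e.surjective z⟩

theorem isBranchEmbedding_closedEBall_val (a : X) (r : ℝ≥0∞) :
    IsBranchEmbedding (⟨a, Metric.mem_closedEBall_self⟩ : Metric.closedEBall a r) Subtype.val where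
  isometry := isometry_subtype_coe
  mem_range y z hz _ := by
    have hy : edist a (y : X) ≤ r := Metric.mem_closedEBall'.1 y.2
    have hzr : edist a z ≤ r := by
      rw [edist_dist, hz, ← edist_dist]
      exact hy
    exact ⟨⟨z, Metric.mem_closedEBall'.2 hzr⟩, rfl⟩

theorem chordRatios_closedEBall_subset (hX : IsGeodesicSpace X) (a : X) (r : ℝ≥0∞) :
    chordRatios (⟨a, Metric.mem_closedEBall_self⟩ : Metric.closedEBall a r) ⊆ chordRatios a := by
  rintro c ⟨⟨x, hxr⟩, hxa, hx⟩
  have hax : 0 < dist a x := dist_pos.2 fun h => hxa (Subtype.ext h.symm)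
  obtain ⟨ε, hε, hεx⟩ := Metric.eventually_nhds_iff.1 (eventually_eventually_nhds.2 hx)
  obtain ⟨s, hs, hsx⟩ : ∃ s, max 0 (dist a x - ε) < s ∧ s < dist a x :=
    exists_between (max_lt hax (sub_lt_self _ hε))
  rw [max_lt_iff] at hs
  obtain ⟨y, hay, hyx⟩ := hX.exists_dist_eq a x hs.1.le hsx.le
  have hyr : edist y a < r := by
    refine lt_of_lt_of_le ?_ (Metric.mem_closedEBall.1 hxr)
    rw [edist_comm, edist_comm x, edist_dist, edist_dist, hay]
    exact (ENNReal.ofReal_lt_ofReal_iff hax).2 hsx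
  have hmem : Metric.closedEBall a r ∈ 𝓝 y :=
    Filter.mem_of_superset (Metric.isOpen_eball.mem_nhds hyr) Metric.eball_subset_closedEBall
  refine ⟨y, fun h => hs.1.ne (by rw [← hay, h, dist_self]), ?_⟩
  refine (isBranchEmbedding_closedEBall_val a r).hasChordRatio_map
    (x := ⟨y, hyr.le⟩) (by rwa [Subtype.range_coe]) (hεx ?_)
  rw [Subtype.dist_eq, hyx]
  linarith

namespace IsWedge

variable {I : Type*} {Y : I → Type*} [∀ i, MetricSpace (Y i)] {a : ∀ i, Y i}
  {W : Type*} [MetricSpace W] {p : W} {f : ∀ i, Y i → W}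

theorem isBranchEmbedding (hW : IsWedge a p f) (i : I) : IsBranchEmbedding (a i) (f i) where
  isometry := hW.isometry i
  mem_range y z _ hyz := by
    obtain ⟨j, z, rfl⟩ := hW.exists_eq z
    rcases eq_or_ne i j with rfl | hij
    · exact Set.mem_range_self z
    · rw [Linked, hW.map_base, hW.dist_eq_add_dist_base hij, dist_comm p] at hyz
      exact absurd hyz (lt_irrefl _)

theorem range_mem_nhds (hW : IsWedge a p f) {i : I} {y : Y i} (hy : y ≠ a i) :
    Set.range (f i) ∈ 𝓝 (f i y) := by
  refine Metric.mem_nhds_iff.2 ⟨dist (a i) y, dist_pos.2 hy.symm, fun w hw => ?_⟩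
  obtain ⟨j, z, rfl⟩ := hW.exists_eq w
  rcases eq_or_ne j i with rfl | hji
  · exact Set.mem_range_self z
  · rw [Metric.mem_ball, hW.dist_eq_add j i hji] at hw
    linarith [dist_nonneg (x := a j) (y := z)]

theorem hasChordRatio_map (hW : IsWedge a p f) {i : I} {y : Y i} {c : ℝ} (hy : y ≠ a i)
    (h : HasChordRatio c (a i) y) : HasChordRatio c p (f i y) := by
  have := (hW.isBranchEmbedding i).hasChordRatio_map (hW.range_mem_nhds hy) h
  rwa [hW.map_base] at this

theorem hasChordRatio_of_map (hW : IsWedge a p f) {i : I} {y : Y i} {c : ℝ}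
    (h : HasChordRatio c p (f i y)) : HasChordRatio c (a i) y := by
  rw [← hW.map_base i] at h
  exact (hW.isBranchEmbedding i).hasChordRatio_of_map h

variable [Nonempty I] {r r' : I → ℝ≥0∞} {k : I} {c : ℝ}

theorem hasChordRatio_truncation (hW : IsWedge a p f) {y : Y k} (hy : y ≠ a k)
    (hyr : f k y ∈ truncation a f r) (h : HasChordRatio c (a k) y) :
    HasChordRatio c (⟨p, hW.base_mem_truncation r⟩ : truncation a f r) ⟨f k y, hyr⟩ := by
  have hball : HasChordRatio c (⟨a k, Metric.mem_closedEBall_self⟩ : Metric.closedEBall (a k) (r k))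
      ⟨y, hW.map_mem_truncation.1 hyr⟩ :=
    (isBranchEmbedding_closedEBall_val (a k) (r k)).hasChordRatio_of_map h
  exact (hW.isWedge_truncation r).hasChordRatio_map (fun h => hy (congrArg Subtype.val h)) hball

theorem exists_map_eq_of_hasChordRatio (hW : IsWedge a p f) (hY : ∀ i, IsGeodesicSpace (Y i))
    (hc : ∀ i ≠ k, c ∉ chordRatios (a i)) {w : truncation a f r} (hwp : (w : W) ≠ p)
    (h : HasChordRatio c (⟨p, hW.base_mem_truncation r⟩ : truncation a f r) w) :
    ∃ y, f k y = w := by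
  obtain ⟨i, y, rfl⟩ := (hW.isWedge_truncation r).exists_eq w
  rcases eq_or_ne i k with rfl | hik
  · exact ⟨y, rfl⟩
  · refine absurd (chordRatios_closedEBall_subset (hY i) (a i) (r i) ⟨y, ?_, ?_⟩) (hc i hik)
    · rintro rfl
      exact hwp (hW.map_base i)
    · exact (hW.isWedge_truncation r).hasChordRatio_of_map h

theorem radius_le_of_isometryEquiv (hW : IsWedge a p f) (hY : ∀ i, IsGeodesicSpace (Y i))
    (hray : ∀ s ≥ 0, ∃ y, dist (a k) y = s) (hk : ∀ y ≠ a k, HasChordRatio c (a k) y)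
    (hc : ∀ i ≠ k, c ∉ chordRatios (a i)) (e : truncation a f r ≃ᵢ truncation a f r')
    (he : e ⟨p, hW.base_mem_truncation r⟩ = ⟨p, hW.base_mem_truncation r'⟩) : r k ≤ r' k := by
  refine ENNReal.le_of_forall_nnreal_lt fun s hs => ?_
  rcases eq_or_ne s 0 with rfl | hs0
  · exact zero_le
  obtain ⟨y, hy⟩ := hray s s.2
  have hya : y ≠ a k := fun h => hs0 (NNReal.coe_eq_zero.1 (by rw [← hy, h, dist_self]))
  have hyr : f k y ∈ truncation a f r := by
    rw [hW.map_mem_truncation, edist_comm, edist_dist, hy, ENNReal.ofReal_coe_nnreal]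
    exact hs.le
  have hdist : dist p (e ⟨f k y, hyr⟩ : W) = s := by
    have := e.dist_eq ⟨p, hW.base_mem_truncation r⟩ ⟨f k y, hyr⟩
    rw [he] at this
    exact this.trans ((hW.dist_base k y).trans hy)
  have hratio : HasChordRatio c (⟨p, hW.base_mem_truncation r'⟩ : truncation a f r')
      (e ⟨f k y, hyr⟩) := by
    rw [← he]
    exact (isBranchEmbedding_isometryEquiv e _).hasChordRatio_map
      (e.surjective.range_eq ▸ Filter.univ_mem) (hW.hasChordRatio_truncation hya hyr (hk y hya))
  obtain ⟨y', hy'⟩ := hW.exists_map_eq_of_hasChordRatio hY hc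
    (fun h => hs0 (NNReal.coe_eq_zero.1 (by rw [← hdist, h, dist_self]))) hratio
  rw [← hy', hW.dist_base] at hdist
  have hmem : f k y' ∈ truncation a f r' := hy' ▸ Subtype.coe_prop _
  rwa [hW.map_mem_truncation, edist_comm, edist_dist, hdist, ENNReal.ofReal_coe_nnreal] at hmem

end IsWedge

end ChordRatio

section PlanarSector

variable {c : ℝ}

/-- The closed planar sector with vertex `0`, symmetric about the positive real axis, whose circular
arc of radius `1` spans a chord of length `c`. This parametrization, rather than the one by the
angle, makes `c` the chord ratio of the sector. -/
def planarSector (c : ℝ) : Set ℂ :=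
  {z | √(1 - (c / 2) ^ 2) * ‖z‖ ≤ z.re}

theorem convex_planarSector (c : ℝ) : Convex ℝ (planarSector c) := by
  intro z hz w hw s t hs ht _
  calc √(1 - (c / 2) ^ 2) * ‖s • z + t • w‖
      ≤ √(1 - (c / 2) ^ 2) * (s * ‖z‖ + t * ‖w‖) := by
        gcongr
        refine (norm_add_le _ _).trans_eq ?_
        rw [norm_smul_of_nonneg hs, norm_smul_of_nonneg ht]
    _ = s * (√(1 - (c / 2) ^ 2) * ‖z‖) + t * (√(1 - (c / 2) ^ 2) * ‖w‖) := by ring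
    _ ≤ s * z.re + t * w.re := by gcongr <;> assumption
    _ = (s • z + t • w).re := by simp only [Complex.add_re, Complex.smul_re, smul_eq_mul]

instance (c : ℝ) : ProperSpace (planarSector c) :=
  .of_isClosed (isClosed_le (continuous_const.mul continuous_norm) Complex.continuous_re)

/-- The vertex of a planar sector, used as its base point. -/
def planarSectorApex (c : ℝ) : planarSector c :=
  ⟨0, by simp [planarSector]⟩

theorem dist_planarSectorApex (z : planarSector c) : dist (planarSectorApex c) z = ‖(z : ℂ)‖ :=
  dist_zero_left (z : ℂ)

theorem exists_dist_planarSectorApex_eq (c : ℝ) {s : ℝ} (hs : 0 ≤ s) :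
    ∃ z, dist (planarSectorApex c) z = s := by
  have hle : √(1 - (c / 2) ^ 2) ≤ 1 := Real.sqrt_le_one.2 (by linarith [sq_nonneg (c / 2)])
  have hnorm : ‖(s : ℂ)‖ = s := by rw [Complex.norm_real, Real.norm_of_nonneg hs]
  refine ⟨⟨s, ?_⟩, (dist_planarSectorApex _).trans hnorm⟩
  rw [planarSector, Set.mem_ofPred_eq, hnorm, Complex.ofReal_re]
  exact mul_le_of_le_one_left hs hle

theorem sq_sqrt_one_sub_sq_half (hc : c ∈ Set.Ioo (0 : ℝ) 2) :
    √(1 - (c / 2) ^ 2) ^ 2 = 1 - (c / 2) ^ 2 :=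
  Real.sq_sqrt (by nlinarith [hc.1, hc.2])

theorem dist_le_of_mem_planarSector (hc : c ∈ Set.Ioo (0 : ℝ) 2) {z w : ℂ}
    (hz : z ∈ planarSector c) (hw : w ∈ planarSector c) (hzw : ‖z‖ = ‖w‖) :
    dist z w ≤ c * ‖z‖ := by
  have hsum : 2 * (√(1 - (c / 2) ^ 2) * ‖z‖) ≤ ‖z + w‖ := by
    have hw' : √(1 - (c / 2) ^ 2) * ‖w‖ ≤ w.re := hw
    rw [← hzw] at hw'
    calc 2 * (√(1 - (c / 2) ^ 2) * ‖z‖) ≤ z.re + w.re := by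
          rw [two_mul]
          exact add_le_add hz hw'
      _ ≤ ‖z + w‖ := Complex.re_le_norm (z + w)
  refine le_of_sq_le_sq ?_ (mul_nonneg hc.1.le (norm_nonneg z))
  calc dist z w ^ 2 = 4 * ‖z‖ ^ 2 - ‖z + w‖ ^ 2 := by
        rw [dist_eq_norm]
        linear_combination parallelogram_law_with_norm ℝ z w - 2 * (‖z‖ + ‖w‖) * hzw
    _ ≤ 4 * ‖z‖ ^ 2 - (2 * (√(1 - (c / 2) ^ 2) * ‖z‖)) ^ 2 := by gcongr
    _ = (c * ‖z‖) ^ 2 := by linear_combination -(4 * ‖z‖ ^ 2) * sq_sqrt_one_sub_sq_half hc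

theorem exists_mem_planarSector_chord (hc : c ∈ Set.Ioo (0 : ℝ) 2) {s : ℝ} (hs : 0 ≤ s) :
    ∃ z ∈ planarSector c, ∃ w ∈ planarSector c, ‖z‖ = s ∧ ‖w‖ = s ∧ dist z w = c * s := by
  set κ := √(1 - (c / 2) ^ 2)
  have hnorm (ε : ℝ) (hε : ε ^ 2 = 1) : ‖(⟨κ * s, ε * (c / 2 * s)⟩ : ℂ)‖ = s := by
    refine (sq_eq_sq₀ (norm_nonneg _) hs).1 ?_
    rw [Complex.sq_norm, Complex.normSq_mk]
    linear_combination s ^ 2 * sq_sqrt_one_sub_sq_half hc + (c / 2 * s) ^ 2 * hε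
  have hmem (ε : ℝ) (hε : ε ^ 2 = 1) : (⟨κ * s, ε * (c / 2 * s)⟩ : ℂ) ∈ planarSector c := by
    rw [planarSector, Set.mem_ofPred_eq, hnorm ε hε]
  refine ⟨_, hmem 1 (by norm_num), _, hmem (-1) (by norm_num), hnorm 1 (by norm_num),
    hnorm (-1) (by norm_num), ?_⟩
  rw [Complex.dist_of_re_eq (by rfl), Real.dist_eq, abs_of_nonneg]
  · ring
  · nlinarith [hc.1]

theorem isGreatest_chordLengths_planarSectorApex (hc : c ∈ Set.Ioo (0 : ℝ) 2) {y : planarSector c}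
    (hy : y ≠ planarSectorApex c) :
    IsGreatest (chordLengths (planarSectorApex c) y) (c * dist (planarSectorApex c) y) := by
  simp only [chordLengths, dist_planarSectorApex]
  have hpos : 0 < ‖(y : ℂ)‖ := by
    rw [← dist_planarSectorApex]
    exact dist_pos.2 hy.symm
  have hlinked {z : planarSector c} (hz : ‖(z : ℂ)‖ = ‖(y : ℂ)‖) :
      Linked (planarSectorApex c) y z := by
    have hyz : dist y z ≤ c * ‖(y : ℂ)‖ := dist_le_of_mem_planarSector hc y.2 z.2 hz.symm
    rw [Linked, dist_comm y (planarSectorApex c), dist_planarSectorApex, dist_planarSectorApex, hz]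
    nlinarith [hc.2]
  constructor
  · obtain ⟨z, hz, w, hw, hzy, hwy, hzw⟩ := exists_mem_planarSector_chord hc (norm_nonneg (y : ℂ))
    exact ⟨⟨z, hz⟩, ⟨w, hw⟩, hzy, hwy, hlinked hzy, hlinked hwy, hzw⟩
  · rintro _ ⟨z, w, hz, hw, -, -, rfl⟩
    exact hz ▸ dist_le_of_mem_planarSector hc z.2 w.2 (hz.trans hw.symm)

theorem hasChordRatio_planarSectorApex (hc : c ∈ Set.Ioo (0 : ℝ) 2) {y : planarSector c}
    (hy : y ≠ planarSectorApex c) : HasChordRatio c (planarSectorApex c) y :=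
  hasChordRatio_of_forall_isGreatest (fun _ => isGreatest_chordLengths_planarSectorApex hc) hy

theorem chordRatios_planarSectorApex_subset (hc : c ∈ Set.Ioo (0 : ℝ) 2) :
    chordRatios (planarSectorApex c) ⊆ {c} := by
  rintro c' ⟨y, hy, hy'⟩
  exact hy'.unique (hasChordRatio_planarSectorApex hc hy) hy

end PlanarSector

section Radii

open scoped ENNReal
open Filter TopologicalSpace

variable {Z : Type*} [TopologicalSpace Z]

theorem exists_continuous_top_zero_of_isClosed [NormalSpace Z] {s t : Set Z} (hs : IsClosed s)
    (ht : IsClosed t) (hst : Disjoint s t) :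
    ∃ r : Z → ℝ≥0∞, Continuous r ∧ (∀ z ∈ s, r z = ∞) ∧ ∀ z ∈ t, r z = 0 := by
  obtain ⟨φ, hφs, hφt, -⟩ := exists_continuous_zero_one_of_isClosed hs ht hst
  refine ⟨fun z => (ENNReal.ofReal (φ z))⁻¹ - 1, ?_, fun z hz => ?_, fun z hz => ?_⟩
  · exact (ENNReal.continuous_sub_right 1).comp
      (continuous_inv.comp (ENNReal.continuous_ofReal.comp φ.continuous))
  · simp [hφs hz]
  · simp [hφt hz]

theorem exists_continuous_radii_of_pairwise_disjoint [NormalSpace Z] {ι : Type*} [Finite ι]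
    {C : ι → Set Z} (hC : ∀ i, IsClosed (C i)) (hdisj : Pairwise (Function.onFun Disjoint C)) :
    ∃ r : ι → Z → ℝ≥0∞, (∀ i, Continuous (r i)) ∧ (∀ i, ∀ z ∈ C i, r i z = ∞) ∧
      ∀ i j, j ≠ i → ∀ z ∈ C i, r j z = 0 := by
  choose r hcont htop hzero using fun i =>
    exists_continuous_top_zero_of_isClosed (hC i)
      ((Set.toFinite {j | j ≠ i}).isClosed_biUnion fun j _ => hC j)
      (Set.disjoint_iUnion₂_right.2 fun j (hj : j ≠ i) => hdisj hj.symm)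
  exact ⟨r, hcont, htop, fun i j hji z hz => hzero j z (Set.mem_biUnion (Ne.symm hji) hz)⟩

theorem eq_of_forall_mem_dense_min_infEDist_eq {E : Type*} [EMetricSpace E] {D C : Set E}
    (hD : Dense D) (hC : IsClosed C) {z w : E} (hw : w ∉ C)
    (h : ∀ q ∈ D, min 1 (Metric.infEDist z ({q} ∪ C)) = min 1 (Metric.infEDist w ({q} ∪ C))) :
    z = w := by
  have hwC : 0 < Metric.infEDist w C := by
    rwa [Metric.infEDist_pos_iff_notMem_closure, hC.closure_eq]
  refine eq_of_forall_edist_le fun ε hε => ?_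
  obtain ⟨q, hqD, hzq⟩ := EMetric.mem_closure_iff.1 (hD z)
    (min (ε / 2) (min 1 (Metric.infEDist w C)))
    (lt_min (ENNReal.half_pos hε.ne') (lt_min one_pos hwC))
  have hq := h q hqD
  simp only [Metric.infEDist_union, Metric.infEDist_singleton] at hq
  have hwq : edist w q < ε / 2 := by
    have hlt : min 1 (min (edist w q) (Metric.infEDist w C)) <
        min (ε / 2) (min 1 (Metric.infEDist w C)) :=
      hq ▸ (((min_le_right _ _).trans (min_le_left _ _)).trans_lt hzq)
    obtain h1 | hwq | hwC' := (min_lt_iff.1 hlt).imp_right min_lt_iff.1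
    · exact absurd h1 (not_lt.2 ((min_le_right _ _).trans (min_le_left _ _)))
    · exact hwq.trans_le (min_le_left _ _)
    · exact absurd hwC' (not_lt.2 ((min_le_right _ _).trans (min_le_right _ _)))
  calc edist z w ≤ edist z q + edist q w := edist_triangle z q w
    _ ≤ ε / 2 + ε / 2 := by
      rw [edist_comm q]
      exact add_le_add (hzq.le.trans (min_le_left _ _)) hwq.le
    _ = ε := ENNReal.add_halves ε

theorem exists_continuous_radii_injOn_compl [MetrizableSpace Z] [SeparableSpace Z] {C : Set Z}
    (hC : IsClosed C) :
    ∃ r : ℕ → Z → ℝ≥0∞, (∀ k, Continuous (r k)) ∧ (∀ δ > 0, ∀ᶠ k in cofinite, ∀ z, r k z ≤ δ) ∧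
      (∀ k, ∀ z ∈ C, r k z = 0) ∧ Set.InjOn (fun z k => r k z) Cᶜ := by
  let := metrizableSpaceMetric Z
  cases isEmpty_or_nonempty Z
  · exact ⟨fun _ _ => 0, fun _ => continuous_const, by simp, by simp, fun z => isEmptyElim z⟩
  have hfinite (k : ℕ) : (2⁻¹ : ℝ≥0∞) ^ k ≠ ∞ := ENNReal.pow_ne_top (by simp)
  refine ⟨fun k z => 2⁻¹ ^ k * min 1 (Metric.infEDist z ({denseSeq Z k} ∪ C)), fun k => ?_,
    fun δ hδ => ?_, fun k z hz => ?_, fun z _ w hw hzw => ?_⟩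
  · exact (ENNReal.continuous_const_mul (hfinite k)).comp
      (continuous_const.min Metric.continuous_infEDist)
  · have hlim := ENNReal.tendsto_pow_atTop_nhds_zero_of_lt_one ENNReal.one_half_lt_one
    rw [Nat.cofinite_eq_atTop]
    filter_upwards [hlim.eventually_le_const hδ] with k hk z
    exact (mul_le_of_le_one_right' (min_le_left _ _)).trans hk
  · simp only [Metric.infEDist_zero_of_mem (Set.mem_union_right _ hz), zero_le,
      min_eq_right, mul_zero]
  · refine eq_of_forall_mem_dense_min_infEDist_eq (denseRange_denseSeq Z) hC hw ?_
    rintro _ ⟨k, rfl⟩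
    exact (ENNReal.mul_right_inj (pow_ne_zero k (by simp)) (hfinite k)).1 (congrFun hzw k)

end Radii

section TruncationMap

open scoped ENNReal
open Filter

namespace IsWedge

variable {I : Type} {Y : I → Type} [∀ i, MetricSpace (Y i)] {a : ∀ i, Y i}
  {W : Type} [MetricSpace W] {p : W} {f : ∀ i, Y i → W} [Nonempty I]

theorem continuous_mk_truncation (hW : IsWedge a p f) (hY : ∀ i, IsGeodesicSpace (Y i))
    {Z : Type*} [TopologicalSpace Z] {r : Z → I → ℝ≥0∞} [∀ z, ProperSpace (truncation a f (r z))]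
    (hcont : ∀ i, Continuous fun z => r z i)
    (hsmall : ∀ δ > 0, ∀ᶠ i in cofinite, ∀ z, r z i ≤ δ) :
    Continuous fun z =>
      PGHSpace.mk (truncation a f (r z)) ⟨p, hW.base_mem_truncation (r z)⟩ := by
  refine continuous_quotient_mk'.comp (continuous_of_eventually_pointedApprox
    (G := fun z => ⟨truncation a f (r z), ⟨p, hW.base_mem_truncation (r z)⟩⟩) ?_)
  intro z₀ R δ hδ
  filter_upwards [eventually_forall_min_le_add hcont hsmall z₀ ENNReal.ofReal_ne_top
    (ENNReal.ofReal_pos.2 hδ)] with z hz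
  exact pointedApprox_subtype _ _ hδ.le
    (fun w => hW.exists_mem_truncation_dist_le hY hδ.le fun i => (hz i).1)
    (fun w => hW.exists_mem_truncation_dist_le hY hδ.le fun i => (hz i).2)

variable {k : I} {r r' : I → ℝ≥0∞}

theorem mk_truncation_eq_mk (hW : IsWedge a p f) [ProperSpace (Y k)]
    [ProperSpace (truncation a f r)] (hk : r k = ∞) (hr : ∀ i ≠ k, r i = 0) :
    PGHSpace.mk (truncation a f r) ⟨p, hW.base_mem_truncation r⟩ = PGHSpace.mk (Y k) (a k) := by
  let g (y : Y k) : truncation a f r := ⟨f k y, hW.map_mem_truncation.2 (hk ▸ le_top)⟩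
  have hbase : g (a k) = ⟨p, hW.base_mem_truncation r⟩ := Subtype.ext (hW.map_base k)
  have hg : Function.Surjective g := by
    rintro ⟨w, hw⟩
    obtain ⟨i, y, rfl⟩ := hW.exists_eq w
    rcases eq_or_ne i k with rfl | hik
    · exact ⟨y, rfl⟩
    · rw [hW.map_mem_truncation, hr i hik, nonpos_iff_eq_zero, edist_eq_zero] at hw
      exact ⟨a k, Subtype.ext ((hW.map_base k).trans (hw ▸ (hW.map_base i).symm))⟩
  let e : Y k ≃ᵢ truncation a f r := .mk' g _ (Function.rightInverse_surjInv hg) (hW.isometry k)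
  exact (PGHSpace.mk_eq_mk_iff.2 ⟨e, hbase⟩).symm

theorem radius_eq_of_mk_truncation_eq (hW : IsWedge a p f) (hY : ∀ i, IsGeodesicSpace (Y i))
    (hray : ∀ s ≥ 0, ∃ y, dist (a k) y = s) {c : ℝ} (hk : ∀ y ≠ a k, HasChordRatio c (a k) y)
    (hc : ∀ i ≠ k, c ∉ chordRatios (a i)) [ProperSpace (truncation a f r)]
    [ProperSpace (truncation a f r')]
    (h : PGHSpace.mk (truncation a f r) ⟨p, hW.base_mem_truncation r⟩ =
      PGHSpace.mk (truncation a f r') ⟨p, hW.base_mem_truncation r'⟩) : r k = r' k := by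
  obtain ⟨e, he⟩ := PGHSpace.mk_eq_mk_iff.1 h
  exact (hW.radius_le_of_isometryEquiv hY hray hk hc e he).antisymm
    (hW.radius_le_of_isometryEquiv hY hray hk hc e.symm (by rw [← he, e.symm_apply_apply]))

end IsWedge

end TruncationMap

section SectorExtension

variable {ι : Type} {X : ι → Type} [∀ i, MetricSpace (X i)] {a : ∀ i, X i} {c : ℕ → ℝ}

/-- The family `X` enlarged by the planar sectors with chord ratios `c 0`, `c 1`, …. -/
def sectorExtension (X : ι → Type) (c : ℕ → ℝ) : ι ⊕ ℕ → Type :=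
  Sum.elim X fun k => planarSector (c k)

noncomputable instance (X : ι → Type) [∀ i, MetricSpace (X i)] (c : ℕ → ℝ) :
    ∀ l, MetricSpace (sectorExtension X c l)
  | .inl i => inferInstanceAs (MetricSpace (X i))
  | .inr k => inferInstanceAs (MetricSpace (planarSector (c k)))

instance (X : ι → Type) [∀ i, MetricSpace (X i)] [∀ i, ProperSpace (X i)] (c : ℕ → ℝ) :
    ∀ l, ProperSpace (sectorExtension X c l)
  | .inl i => inferInstanceAs (ProperSpace (X i))
  | .inr k => inferInstanceAs (ProperSpace (planarSector (c k)))

/-- The base points of `sectorExtension X c`: the given ones and the apices of the sectors. -/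
def sectorExtensionBase (a : ∀ i, X i) (c : ℕ → ℝ) : ∀ l, sectorExtension X c l
  | .inl i => a i
  | .inr k => planarSectorApex (c k)

theorem isCAT0Space_sectorExtension (hX : ∀ i, IsCAT0Space (X i)) (c : ℕ → ℝ) :
    ∀ l, IsCAT0Space (sectorExtension X c l)
  | .inl i => hX i
  | .inr k => isCAT0Space_of_convex (convex_planarSector (c k))

theorem notMem_chordRatios_sectorExtensionBase (hc : ∀ k, c k ∈ Set.Ioo (0 : ℝ) 2)
    (hinj : Function.Injective c) {k : ℕ} (hX : ∀ i, c k ∉ chordRatios (a i)) :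
    ∀ l ≠ Sum.inr k, c k ∉ chordRatios (sectorExtensionBase a c l)
  | .inl i, _ => hX i
  | .inr k', hk' => fun h =>
    hk' (congrArg Sum.inr (hinj (chordRatios_planarSectorApex_subset (hc k') h)).symm)

theorem eventually_cofinite_sum {α β : Type*} [Finite α] {P : α ⊕ β → Prop}
    (h : ∀ᶠ b in Filter.cofinite, P (Sum.inr b)) : ∀ᶠ l in Filter.cofinite, P l := by
  refine ((Set.finite_range Sum.inl).union (Set.Finite.image Sum.inr h)).subset ?_
  rintro (x | y) hy
  exacts [Or.inl ⟨x, rfl⟩, Or.inr ⟨y, hy, rfl⟩]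

theorem exists_injective_mem_Ioo_notMem {S : Set ℝ} (hS : S.Countable) {x y : ℝ} (hxy : x < y) :
    ∃ c : ℕ → ℝ, Function.Injective c ∧ (∀ k, c k ∈ Set.Ioo x y) ∧ ∀ k, c k ∉ S := by
  have hinfinite : (Set.Ioo x y \ S).Infinite := by
    intro hfin
    have hcountable : (Set.Ioo x y).Countable :=
      (hfin.countable.union hS).mono (Set.subset_sdiff_union _ _)
    exact (Cardinal.Real.Ioo_countable_iff.1 hcountable).not_gt hxy
  exact ⟨fun k => hinfinite.natEmbedding _ k,
    Subtype.val_injective.comp (hinfinite.natEmbedding _).injective,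
    fun k => (hinfinite.natEmbedding _ k).2.1, fun k => (hinfinite.natEmbedding _ k).2.2⟩

end SectorExtension

theorem statement19_general {Z : Type*} [TopologicalSpace Z] [TopologicalSpace.MetrizableSpace Z]
    [TopologicalSpace.SeparableSpace Z] {ι : Type} [Finite ι] (C : ι → Set Z)
    (hC : ∀ i, IsClosed (C i)) (hdisj : Pairwise (Function.onFun Disjoint C)) (X : ι → Type)
    [∀ i, MetricSpace (X i)] [∀ i, ProperSpace (X i)] (a : ∀ i, X i)
    (hcat : ∀ i, IsCAT0Space (X i)) :
    ∃ F : Z → PGHSpace,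
      Continuous F ∧
      (∀ z, F z ∈ PGHCat0) ∧
      (∀ i, ∀ z ∈ C i, F z = PGHSpace.mk (X i) (a i)) ∧
      Set.InjOn F (⋃ i, C i)ᶜ := by
  obtain ⟨c, hc_inj, hc, hcX⟩ := exists_injective_mem_Ioo_notMem
    (Set.countable_iUnion fun i => countable_chordRatios (a i)) (zero_lt_two (α := ℝ))
  simp only [Set.mem_iUnion, not_exists] at hcX
  obtain ⟨rX, hrX_cont, hrX_top, hrX_zero⟩ := exists_continuous_radii_of_pairwise_disjoint hC hdisj
  obtain ⟨ρ, hρ_cont, hρ_small, hρ_zero, hρ_inj⟩ :=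
    exists_continuous_radii_injOn_compl (isClosed_iUnion_of_finite hC)
  let r (z : Z) : ι ⊕ ℕ → ENNReal := Sum.elim (rX · z) (ρ · z)
  have hr_small : ∀ δ > 0, ∀ᶠ l in Filter.cofinite, ∀ z, r z l ≤ δ :=
    fun δ hδ => eventually_cofinite_sum (hρ_small δ hδ)
  have hW := Wedge.isWedge (sectorExtensionBase a c) (Sum.inr 0)
  have hY := isCAT0Space_sectorExtension hcat c
  have (z : Z) := hW.properSpace_truncation (r := r z) fun δ hδ =>
    (hr_small δ hδ).mono fun l hl => hl z
  refine ⟨fun z => PGHSpace.mk (truncation _ _ (r z)) ⟨_, hW.base_mem_truncation (r z)⟩,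
    hW.continuous_mk_truncation (fun l => (hY l).1) ?_ hr_small,
    fun z => PGHSpace.mk_mem_PGHCat0 (hW.isCAT0Space_truncation hY (r z)) _, fun i z hz => ?_,
    fun z hz w hw hzw => hρ_inj hz hw (funext fun k => ?_)⟩
  · rintro (i | k)
    exacts [hrX_cont i, hρ_cont k]
  · refine hW.mk_truncation_eq_mk (r := r z) (k := Sum.inl i) (hrX_top i z hz) ?_
    rintro (j | k) hl
    exacts [hrX_zero i j (fun h => hl (congrArg Sum.inl h)) z hz,
      hρ_zero k z (Set.mem_iUnion_of_mem i hz)]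
  · exact hW.radius_eq_of_mk_truncation_eq (k := Sum.inr k) (fun l => (hY l).1)
      (fun s => exists_dist_planarSectorApex_eq (c k))
      (fun y => hasChordRatio_planarSectorApex (hc k))
      (notMem_chordRatios_sectorExtensionBase hc hc_inj (hcX k)) hzw

/-- Let `n ≥ 1`, `m ≥ 2`, let `H` be a compact metrizable
space with `n+1` distinct points `v 0, …, v n`, and let `H^× = H \ range v`.
Let `(X 0, a 0), …, (X n, a n)` be pointed proper CAT(0) metric spaces with
positive pairwise pointed Gromov–Hausdorff distances.  Then there is a
continuous map `F : H × Fin m → 𝒫𝒵 ⊆ 𝒫ℳ` with `F (v i, j)` the pointed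
isometry class of `(X i, a i)` for all `i, j`, and `F` injective on
`H^× × Fin m`. -/
theorem statement19 {H : Type*} [TopologicalSpace H] [CompactSpace H]
    [TopologicalSpace.MetrizableSpace H]
    (n m : ℕ) (hn : 1 ≤ n) (hm : 2 ≤ m)
    (v : Fin (n + 1) → H) (hv : Function.Injective v)
    (X : Fin (n + 1) → Type) [∀ i, MetricSpace (X i)] [∀ i, ProperSpace (X i)]
    (a : ∀ i, X i)
    (hcat : ∀ i, IsCAT0Space (X i))
    (hdist : ∀ i j, i ≠ j → 0 < pghDistOf (X i) (X j) (a i) (a j)) :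
    ∃ F : H × Fin m → PGHSpace,
      Continuous F ∧
      (∀ x, F x ∈ PGHCat0) ∧
      (∀ i j, F (v i, j) = PGHSpace.mk (X i) (a i)) ∧
      Set.InjOn F (((Set.range v)ᶜ) ×ˢ (Set.univ : Set (Fin m))) := by
  obtain ⟨F, hF_cont, hF_cat, hF_eq, hF_inj⟩ :=
    statement19_general (fun i => {v i} ×ˢ (Set.univ : Set (Fin m)))
      (fun i => isClosed_singleton.prod isClosed_univ)
      (fun i j hij => Set.disjoint_prod.2 (Or.inl (by simpa using hv.ne hij))) X a hcat
  refine ⟨F, hF_cont, hF_cat, fun i j => hF_eq i _ ⟨rfl, trivial⟩, hF_inj.mono ?_⟩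
  rintro ⟨x, j⟩ ⟨hx, -⟩ hxC
  obtain ⟨i, rfl, -⟩ := Set.mem_iUnion.1 hxC
  exact hx ⟨i, rfl⟩
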